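/- arXiv:2307.13299 — 4 statements merged into one kernel-verified Lean document; each statement's English description precedes it below -/
import Mathlib

section
/- Validity of the locally-compatible-paths inequality: for every strategy Z, every decision node j ∈ D, every s_j ∈ S_j and every s_{I(j)} ∈ S_{I(j)}, one has ∑_{s ∈ S_{s_j|s_{I(j)}} ∩ S(Z)} p(s) ≤ z(s_j | s_{I(j)}); in particular, the sum equals 0 whenever Z_j(s_{I(j)}) ≠ s_j. -/
/-!
STATEMENT 2: Validity of the locally-compatible-paths inequality: for every strategy Z,
every decision node j ∈ D, every s_j ∈ S_j and every s_{I(j)} ∈ S_{I(j)},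
∑_{s ∈ S_{s_j|s_{I(j)}} ∩ S(Z)} p(s) ≤ z(s_j | s_{I(j)});
in particular, the sum equals 0 whenever Z_j(s_{I(j)}) ≠ s_j.
-/

open Finset

attribute [local instance] Classical.propDecidable

/-- Restriction of a path `s` to the information set `I j` of node `j`. -/
def restrict {n : ℕ} {S : Fin n → Type} (I : Fin n → Finset (Fin n))
    (s : ∀ j, S j) (j : Fin n) : ∀ i : (I j), S i.1 :=
  fun i => s i.1

/-- The path probability `p(s) = ∏_{j ∈ C} P(s_j | s_{I(j)})`. -/
def pathProb {n : ℕ} {S : Fin n → Type} (C : Finset (Fin n))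
    (I : Fin n → Finset (Fin n))
    (P : ∀ j : Fin n, (∀ i : (I j), S i.1) → S j → ℝ)
    (s : ∀ j, S j) : ℝ :=
  ∏ j ∈ C, P j (restrict I s j) (s j)

/-!
A strategy turns every decision node into a chance node with a deterministic conditional
distribution. In the resulting network without decisions, a path has its original probability if it
is compatible with the strategy and probability zero otherwise. Since the information sets respect
the order of the nodes, path probabilities sum to one, so those of the compatible paths do as well.
-/

theorem sum_prod_eq_one_of_dependsOn_Iic {R : Type*} [CommSemiring R] {n : ℕ} {S : Fin n → Type*}
    [∀ k, Fintype (S k)] [∀ k, Nonempty (S k)] (f : Fin n → (∀ k, S k) → R)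
    (hdep : ∀ k, DependsOn (f k) (Set.Iic k))
    (hsum : ∀ k s, ∑ x, f k (Function.update s k x) = 1) :
    ∑ s, ∏ k, f k s = 1 := by
  induction n with
  | zero => simp
  | succ n ih =>
    -- Once the state of the first node is fixed, the other factors are again of this form.
    have sum_tail (x : S 0) : ∑ t, ∏ k : Fin n, f k.succ (Fin.cons x t) = 1 := by
      refine ih (fun k t ↦ f k.succ (Fin.cons x t)) (fun k s t hst ↦ hdep _ fun i hi ↦ ?_)
        fun k t ↦ ?_
      · cases i using Fin.cases with
        | zero => rfl
        | succ i => exact hst i (Fin.succ_le_succ_iff.mp hi)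
      · simpa only [Fin.cons_update] using hsum k.succ (Fin.cons x t)
    let s₀ : ∀ k, S k := fun _ ↦ Classical.arbitrary _
    have head_eq (x : S 0) (t : ∀ k : Fin n, S k.succ) :
        f 0 (Fin.cons x t) = f 0 (Function.update s₀ 0 x) :=
      hdep 0 fun i hi ↦ by
        obtain rfl : i = 0 := Fin.le_zero_iff.mp hi
        simp
    calc ∑ s, ∏ k, f k s
        = ∑ x, ∑ t, ∏ k, f k (Fin.cons x t) := by
          rw [← (Fin.consEquiv S).sum_comp, Fintype.sum_prod_type]
          rfl
      _ = ∑ x, f 0 (Function.update s₀ 0 x) * ∑ t, ∏ k : Fin n, f k.succ (Fin.cons x t) := by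
          simp only [Fin.prod_univ_succ, head_eq, mul_sum]
      _ = 1 := by simp only [sum_tail, mul_one, hsum]

section InfluenceDiagram

variable {n : ℕ} {S : Fin n → Type} {C D : Finset (Fin n)} {I : Fin n → Finset (Fin n)}
  {P : ∀ j : Fin n, (∀ i : I j, S i.1) → S j → ℝ} {Z : ∀ j : Fin n, (∀ i : I j, S i.1) → S j}
  {j : Fin n} {sj : S j} {sI : ∀ i : I j, S i.1}

theorem dependsOn_restrict (I : Fin n → Finset (Fin n)) (j : Fin n) :
    DependsOn (fun s : ∀ k, S k ↦ restrict I s j) (I j) :=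
  fun _ _ h ↦ funext fun i ↦ h i.1 i.2

theorem restrict_update_of_notMem {k : Fin n} (hk : k ∉ I j) (s : ∀ k, S k) (x : S k) :
    restrict I (Function.update s k x) j = restrict I s j :=
  dependsOn_restrict I j fun _ hi ↦ Function.update_of_ne (ne_of_mem_of_not_mem hi hk) _ _

theorem pathProb_nonneg (hP : ∀ j ∈ C, ∀ sI sj, 0 ≤ P j sI sj) (s : ∀ k, S k) :
    0 ≤ pathProb C I P s :=
  prod_nonneg fun j hj ↦ hP j hj _ _

theorem sum_pathProb_univ_eq_one [∀ j, Fintype (S j)] [∀ j, Nonempty (S j)]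
    (hI : ∀ j, ∀ i ∈ I j, i < j) (hP : ∀ j sI, ∑ sj, P j sI sj = 1) :
    ∑ s, pathProb univ I P s = 1 := by
  refine sum_prod_eq_one_of_dependsOn_Iic (fun k s ↦ P k (restrict I s k) (s k)) ?_ ?_
  · intro k s t hst
    have hrestrict : restrict I s k = restrict I t k :=
      dependsOn_restrict I k fun i hi ↦ hst i (hI k i hi).le
    simp only [hrestrict, hst k Set.self_mem_Iic]
  · intro k s
    have hk : k ∉ I k := fun h ↦ (hI k k h).false
    simpa only [restrict_update_of_notMem hk, Function.update_self] using hP k (restrict I s k)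

/-- The conditional probabilities of the network obtained by fixing the strategy `Z`: nodes in `C`
keep their probabilities `P`, every other node `j` takes the state `Z j sI` with probability one. -/
noncomputable def inducedKernel (C : Finset (Fin n))
    (P : ∀ j : Fin n, (∀ i : I j, S i.1) → S j → ℝ)
    (Z : ∀ j : Fin n, (∀ i : I j, S i.1) → S j)
    (j : Fin n) (sI : ∀ i : I j, S i.1) (sj : S j) : ℝ :=
  if j ∈ C then P j sI sj else if Z j sI = sj then 1 else 0

theorem sum_inducedKernel_eq_one [∀ j, Fintype (S j)] (hP : ∀ j ∈ C, ∀ sI, ∑ sj, P j sI sj = 1)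
    (j : Fin n) (sI : ∀ i : I j, S i.1) : ∑ sj, inducedKernel C P Z j sI sj = 1 := by
  by_cases hj : j ∈ C
  · simpa only [inducedKernel, if_pos hj] using hP j hj sI
  · simp [inducedKernel, hj]

theorem pathProb_univ_inducedKernel (s : ∀ k, S k) :
    pathProb univ I (inducedKernel C P Z) s =
      if ∀ k ∈ Cᶜ, Z k (restrict I s k) = s k then pathProb C I P s else 0 := by
  have prod_chance : ∏ k ∈ C, inducedKernel C P Z k (restrict I s k) (s k) = pathProb C I P s :=
    prod_congr rfl fun k hk ↦ if_pos hk
  have prod_decision : ∏ k ∈ Cᶜ, inducedKernel C P Z k (restrict I s k) (s k) =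
      if ∀ k ∈ Cᶜ, Z k (restrict I s k) = s k then 1 else 0 := by
    calc ∏ k ∈ Cᶜ, inducedKernel C P Z k (restrict I s k) (s k)
        = ∏ k ∈ Cᶜ, if Z k (restrict I s k) = s k then 1 else 0 :=
          prod_congr rfl fun k hk ↦ if_neg (mem_compl.mp hk)
      -- `convert` since the `Decidable` instance of `prod_boole` is not the classical one.
      _ = _ := by convert prod_boole ..
  rw [pathProb, ← prod_mul_prod_compl C, prod_chance, prod_decision, mul_ite, mul_one, mul_zero]

/-- The set `S(Z)` of paths that follow the strategy `Z` at the decision nodes `D`. -/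
noncomputable def compatiblePaths [∀ j, Fintype (S j)] (D : Finset (Fin n))
    (I : Fin n → Finset (Fin n)) (Z : ∀ j : Fin n, (∀ i : I j, S i.1) → S j) :
    Finset (∀ k, S k) :=
  {s | ∀ k ∈ D, Z k (restrict I s k) = s k}

/-- The set `S_{s_j|s_{I(j)}} ∩ S(Z)` of compatible paths with state `sj` at node `j` and
information state `sI`. -/
noncomputable def locallyCompatiblePaths [∀ j, Fintype (S j)] (D : Finset (Fin n))
    (I : Fin n → Finset (Fin n)) (Z : ∀ j : Fin n, (∀ i : I j, S i.1) → S j)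
    (j : Fin n) (sj : S j) (sI : ∀ i : I j, S i.1) : Finset (∀ k, S k) :=
  {s | (s j = sj ∧ restrict I s j = sI) ∧ ∀ k ∈ D, Z k (restrict I s k) = s k}

theorem locallyCompatiblePaths_subset_compatiblePaths [∀ j, Fintype (S j)] :
    locallyCompatiblePaths D I Z j sj sI ⊆ compatiblePaths D I Z :=
  monotone_filter_right _ fun _ _ h ↦ h.2

theorem locallyCompatiblePaths_eq_empty [∀ j, Fintype (S j)] (hj : j ∈ D) (hZ : Z j sI ≠ sj) :
    locallyCompatiblePaths D I Z j sj sI = ∅ := by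
  refine filter_eq_empty_iff.mpr ?_
  rintro s - ⟨⟨rfl, rfl⟩, hs⟩
  exact hZ (hs j hj)

theorem sum_pathProb_compatiblePaths_eq_one [∀ j, Fintype (S j)] [∀ j, Nonempty (S j)]
    (hI : ∀ j, ∀ i ∈ I j, i < j) (hP : ∀ j ∈ C, ∀ sI, ∑ sj, P j sI sj = 1) :
    ∑ s ∈ compatiblePaths Cᶜ I Z, pathProb C I P s = 1 := by
  rw [compatiblePaths, sum_filter,
    ← sum_pathProb_univ_eq_one hI (sum_inducedKernel_eq_one (Z := Z) hP)]
  simp only [pathProb_univ_inducedKernel]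

end InfluenceDiagram

theorem locally_compatible_paths_inequality_valid {n : ℕ}
    (S : Fin n → Type) [∀ j, Fintype (S j)] [∀ j, Nonempty (S j)]
    (C D : Finset (Fin n)) (hCD : Disjoint C D) (hCDunion : C ∪ D = Finset.univ)
    (I : Fin n → Finset (Fin n)) (hI : ∀ j, ∀ i ∈ I j, i < j)
    (P : ∀ j : Fin n, (∀ i : (I j), S i.1) → S j → ℝ)
    (hPnonneg : ∀ j ∈ C, ∀ (sI : ∀ i : (I j), S i.1) (sj : S j), 0 ≤ P j sI sj)
    (hPsum : ∀ j ∈ C, ∀ sI : ∀ i : (I j), S i.1, ∑ sj : S j, P j sI sj = 1)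
    (Z : ∀ j : Fin n, (∀ i : (I j), S i.1) → S j)
    (j : Fin n) (hj : j ∈ D) (sj : S j) (sI : ∀ i : (I j), S i.1) :
    (∑ s ∈ Finset.univ.filter (fun s : ∀ k, S k =>
        (s j = sj ∧ restrict I s j = sI) ∧ ∀ k ∈ D, Z k (restrict I s k) = s k),
      pathProb C I P s) ≤ (if Z j sI = sj then (1 : ℝ) else 0)
    ∧ (Z j sI ≠ sj →
        (∑ s ∈ Finset.univ.filter (fun s : ∀ k, S k =>
            (s j = sj ∧ restrict I s j = sI) ∧ ∀ k ∈ D, Z k (restrict I s k) = s k),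
          pathProb C I P s) = 0) := by
  obtain rfl : Cᶜ = D := IsCompl.compl_eq ⟨hCD, codisjoint_iff.mpr hCDunion⟩
  change ∑ s ∈ locallyCompatiblePaths Cᶜ I Z j sj sI, pathProb C I P s ≤ _ ∧
    (_ → ∑ s ∈ locallyCompatiblePaths Cᶜ I Z j sj sI, pathProb C I P s = 0)
  have sum_eq_zero (hZ : Z j sI ≠ sj) :
      ∑ s ∈ locallyCompatiblePaths Cᶜ I Z j sj sI, pathProb C I P s = 0 := by
    rw [locallyCompatiblePaths_eq_empty hj hZ, sum_empty]
  refine ⟨?_, sum_eq_zero⟩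
  split_ifs with hZ
  · calc ∑ s ∈ locallyCompatiblePaths Cᶜ I Z j sj sI, pathProb C I P s
        ≤ ∑ s ∈ compatiblePaths Cᶜ I Z, pathProb C I P s :=
          sum_le_sum_of_subset_of_nonneg locallyCompatiblePaths_subset_compatiblePaths
            fun s _ _ ↦ pathProb_nonneg hPnonneg s
      _ = 1 := sum_pathProb_compatiblePaths_eq_one hI hPsum
  · exact (sum_eq_zero hZ).le
end

section
/- Validity of the strengthened Γ-inequality: let S* ⊆ S be any subset of paths (the effective paths after removing forbidden paths) and write S*_{s_j|s_{I(j)}} = S* ∩ S_{s_j|s_{I(j)}}. For every strategy Z, every decision node j ∈ D, every s_j ∈ S_j and every s_{I(j)} ∈ S_{I(j)}, the number of paths in S*_{s_j|s_{I(j)}} compatible with Z satisfies |S*_{s_j|s_{I(j)}} ∩ S(Z)| ≤ Γ(s_j|s_{I(j)}) · z(s_j | s_{I(j)}), where Γ(s_j|s_{I(j)}) = min{ |S*_{s_j|s_{I(j)}}|, ∏_{k ∈ C \ ({j} ∪ I(j))} |S_k| }. -/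
/-!
STATEMENT 6: Validity of the strengthened Γ-inequality: let S* ⊆ S be any subset of
paths and write S*_{s_j|s_{I(j)}} = S* ∩ S_{s_j|s_{I(j)}}. For every strategy Z, every
decision node j ∈ D, every s_j ∈ S_j and every s_{I(j)} ∈ S_{I(j)},
|S*_{s_j|s_{I(j)}} ∩ S(Z)| ≤ Γ(s_j|s_{I(j)}) · z(s_j | s_{I(j)}), where
Γ(s_j|s_{I(j)}) = min{ |S*_{s_j|s_{I(j)}}|, ∏_{k ∈ C \ ({j} ∪ I(j))} |S_k| }.
-/

open Finset

attribute [local instance] Classical.propDecidable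

/-!
Once the states of the chance nodes are fixed, a strategy determines the path: decision nodes are
filled in recursively along the well-founded information relation. A path of `S*_{s_j|s_I(j)}`
compatible with `Z` has its states on `I(j)` prescribed, and `j` is itself a decision node, so it is
determined by its states on `C \ ({j} ∪ I(j))`; counting these gives the product bound. If
`Z_j(s_I(j)) ≠ s_j`, no such path exists.
-/

/-- The path `s` is compatible with the strategy `Z`, i.e. `s ∈ S(Z)`: at every node of `D` it takes
the state that `Z` prescribes. `Z` has a component at every node, but only those at nodes of `D`
matter. -/
def IsCompatiblePath {ι : Type*} {S : ι → Type*} (I : ι → Finset ι) (D : Set ι)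
    (Z : ∀ k, (∀ i : I k, S i) → S k) (s : ∀ k, S k) : Prop :=
  ∀ k ∈ D, Z k ((I k).restrict s) = s k

section

variable {ι : Type*} {S : ι → Type*} {I : ι → Finset ι} {D : Set ι}
  {Z : ∀ k, (∀ i : I k, S i) → S k}

theorem IsCompatiblePath.eq_of_forall_notMem (hI : WellFounded fun i k => i ∈ I k)
    {s t : ∀ k, S k} (hs : IsCompatiblePath I D Z s) (ht : IsCompatiblePath I D Z t)
    (hst : ∀ k ∉ D, s k = t k) : s = t := by
  funext k
  induction k using hI.induction with
  | _ k ih =>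
    by_cases hk : k ∈ D
    · have hinfo : (I k).restrict s = (I k).restrict t := funext fun i => ih i i.2
      rw [← hs k hk, ← ht k hk, hinfo]
    · exact hst k hk

theorem IsCompatiblePath.injOn_restrict (hI : WellFounded fun i k => i ∈ I k) {J T : Finset ι}
    (hJT : ∀ k ∉ D, k ∈ J ∨ k ∈ T) (sJ : ∀ i : J, S i) :
    Set.InjOn T.restrict {s | J.restrict s = sJ ∧ IsCompatiblePath I D Z s} := by
  rintro s ⟨hsJ, hs⟩ t ⟨htJ, ht⟩ hT
  refine hs.eq_of_forall_notMem hI ht fun k hk => ?_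
  rcases hJT k hk with hkJ | hkT
  · exact congrFun (hsJ.trans htJ.symm) ⟨k, hkJ⟩
  · exact congrFun hT ⟨k, hkT⟩

theorem card_le_prod_card_of_injOn_restrict [∀ k, Fintype (S k)] {A : Finset (∀ k, S k)}
    {T : Finset ι} (hA : Set.InjOn T.restrict (A : Set (∀ k, S k))) :
    A.card ≤ ∏ k ∈ T, Fintype.card (S k) :=
  calc
    A.card ≤ Fintype.card (∀ k : T, S k) :=
      card_le_card_of_injOn T.restrict (fun _ _ => mem_univ _) hA
    _ = ∏ k ∈ T, Fintype.card (S k) := by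
      rw [Fintype.card_pi, prod_coe_sort T fun k => Fintype.card (S k)]

theorem gamma_inequality_valid_general [∀ k, Fintype (S k)] {C : Finset ι}
    (hC : ∀ k ∉ D, k ∈ C) (hI : WellFounded fun i k => i ∈ I k) (Sstar : Finset (∀ k, S k))
    {j : ι} (hj : j ∈ D) (sj : S j) (sI : ∀ i : I j, S i) :
    (Sstar.filter fun s =>
        (s j = sj ∧ (I j).restrict s = sI) ∧ IsCompatiblePath I D Z s).card
      ≤ min
          (Sstar.filter fun s => s j = sj ∧ (I j).restrict s = sI).card
          (∏ k ∈ C \ insert j (I j), Fintype.card (S k))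
        * (if Z j sI = sj then 1 else 0) := by
  split_ifs with hz
  · rw [mul_one]
    refine le_min (card_le_card (monotone_filter_right _ fun _ _ hs => hs.1)) ?_
    have hcover : ∀ k ∉ D, k ∈ I j ∨ k ∈ C \ insert j (I j) := by
      intro k hk
      have hkj : k ≠ j := fun h => hk (h ▸ hj)
      have hkC := hC k hk
      simp only [mem_sdiff, mem_insert]
      tauto
    refine card_le_prod_card_of_injOn_restrict
      ((IsCompatiblePath.injOn_restrict (Z := Z) hI hcover sI).mono fun s hs => ?_)
    obtain ⟨-, ⟨-, hsI⟩, hsZ⟩ := mem_filter.mp hs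
    exact ⟨hsI, hsZ⟩
  · rw [mul_zero, Nat.le_zero, card_eq_zero, filter_eq_empty_iff]
    rintro s - ⟨⟨rfl, rfl⟩, hsZ⟩
    exact hz (hsZ j hj)

end

theorem gamma_inequality_valid {n : ℕ}
    (S : Fin n → Type) [∀ j, Fintype (S j)] [∀ j, Nonempty (S j)]
    (C D : Finset (Fin n)) (hCD : Disjoint C D) (hCDunion : C ∪ D = Finset.univ)
    (I : Fin n → Finset (Fin n)) (hI : ∀ j, ∀ i ∈ I j, i < j)
    (Sstar : Finset (∀ j, S j))
    (Z : ∀ j : Fin n, (∀ i : (I j), S i.1) → S j)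
    (j : Fin n) (hj : j ∈ D) (sj : S j) (sI : ∀ i : (I j), S i.1) :
    (Sstar.filter (fun s : ∀ k, S k =>
        (s j = sj ∧ restrict I s j = sI) ∧ ∀ k ∈ D, Z k (restrict I s k) = s k)).card
      ≤ min
          (Sstar.filter
            (fun s : ∀ k, S k => s j = sj ∧ restrict I s j = sI)).card
          (∏ k ∈ C \ insert j (I j), Fintype.card (S k))
        * (if Z j sI = sj then 1 else 0) := by
  convert gamma_inequality_valid_general (I := I) (D := (D : Set (Fin n))) (Z := Z) (C := C)
    (fun k hk => (mem_union.mp (hCDunion ▸ mem_univ k)).resolve_right hk)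
    (Subrelation.wf (fun h => hI _ _ h) wellFounded_lt) Sstar hj sj sI <;> rfl
end

section
/- The lower-bounding constraint is unnecessary for nonnegative utilities: fix a strategy Z with induced binary variables z, and let U : S → ℝ satisfy U(s) ≥ 0 for all s ∈ S. Then for every π : S → ℝ satisfying 0 ≤ π(s) ≤ p(s) for all s ∈ S and π(s) ≤ z(s_j | s_{I(j)}) for all j ∈ D and all s ∈ S, one has ∑_{s∈S} π(s)U(s) ≤ ∑_{s∈S(Z)} p(s)U(s), and this upper bound is attained by the feasible choice π(s) = p(s) for s ∈ S(Z) and π(s) = 0 otherwise. -/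
/-!
STATEMENT 8: The lower-bounding constraint is unnecessary for nonnegative utilities:
fix a strategy Z with induced binary variables z, and let U : S → ℝ satisfy U(s) ≥ 0
for all s ∈ S. Then for every π : S → ℝ satisfying 0 ≤ π(s) ≤ p(s) for all s ∈ S and
π(s) ≤ z(s_j | s_{I(j)}) for all j ∈ D and all s ∈ S, one has
∑_{s∈S} π(s)U(s) ≤ ∑_{s∈S(Z)} p(s)U(s), and this upper bound is attained by the
feasible choice π(s) = p(s) for s ∈ S(Z) and π(s) = 0 otherwise.
-/

open Finset

attribute [local instance] Classical.propDecidable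

theorem pathProb_mem_Icc {n : ℕ} {S : Fin n → Type} {C : Finset (Fin n)}
    {I : Fin n → Finset (Fin n)} {P : ∀ j : Fin n, (∀ i : (I j), S i.1) → S j → ℝ}
    (hP : ∀ j ∈ C, ∀ sI sj, P j sI sj ∈ Set.Icc 0 1) (s : ∀ j, S j) :
    pathProb C I P s ∈ Set.Icc 0 1 :=
  ⟨prod_nonneg fun j hj => (hP j hj _ _).1,
    prod_le_one (fun j hj => (hP j hj _ _).1) fun j hj => (hP j hj _ _).2⟩

/- The right-hand side collects the constraints on the value `x` at a single path, and the left-hand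
side says that they have a largest solution. -/
theorem le_ite_forall_mem_iff {ι R : Type*} [Zero R] [One R] [Preorder R] [ZeroLEOneClass R]
    {D : Finset ι} {c : ι → Prop} [DecidablePred c] [Decidable (∀ i ∈ D, c i)] {x p : R}
    (hp : p ∈ Set.Icc 0 1) :
    x ≤ (if ∀ i ∈ D, c i then p else 0) ↔ x ≤ p ∧ ∀ i ∈ D, x ≤ if c i then 1 else 0 := by
  by_cases h : ∀ i ∈ D, c i
  · rw [if_pos h]
    refine ⟨fun hx => ⟨hx, fun i hi => ?_⟩, And.left⟩
    rw [if_pos (h i hi)]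
    exact hx.trans hp.2
  · rw [if_neg h]
    constructor
    · refine fun hx => ⟨hx.trans hp.1, fun i _ => hx.trans ?_⟩
      split_ifs
      exacts [zero_le_one, le_rfl]
    · rintro ⟨-, hx⟩
      push Not at h
      obtain ⟨i, hi, hci⟩ := h
      simpa only [if_neg hci] using hx i hi

/- `c j s` stands for `z(s_j | s_{I(j)}) = 1`. The cut-off `π₀` of `p` dominates every feasible `π`
pointwise, so it maximizes any objective with nonnegative coefficients. -/
theorem lower_bound_constraint_unnecessary_general {ι α R : Type*} [Semiring R] [PartialOrder R]
    [IsOrderedRing R] [Fintype α] (D : Finset ι) (c : ι → α → Prop) [∀ j, DecidablePred (c j)]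
    [∀ s, Decidable (∀ j ∈ D, c j s)] {p U π : α → R} (hp : ∀ s, p s ∈ Set.Icc 0 1)
    (hU : ∀ s, 0 ≤ U s) (hπp : ∀ s, π s ≤ p s)
    (hπc : ∀ j ∈ D, ∀ s, π s ≤ if c j s then 1 else 0) :
    ∑ s, π s * U s ≤ ∑ s with ∀ j ∈ D, c j s, p s * U s ∧
      (let π₀ : α → R := fun s => if ∀ j ∈ D, c j s then p s else 0
      (∀ s, 0 ≤ π₀ s ∧ π₀ s ≤ p s) ∧
      (∀ j ∈ D, ∀ s, π₀ s ≤ if c j s then 1 else 0) ∧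
      ∑ s, π₀ s * U s = ∑ s with ∀ j ∈ D, c j s, p s * U s) := by
  let π₀ : α → R := fun s => if ∀ j ∈ D, c j s then p s else 0
  have hπ₀_feasible (s : α) : π₀ s ≤ p s ∧ ∀ j ∈ D, π₀ s ≤ if c j s then 1 else 0 :=
    (le_ite_forall_mem_iff (hp s)).1 le_rfl
  have hπ₀_largest (s : α) : π s ≤ π₀ s :=
    (le_ite_forall_mem_iff (hp s)).2 ⟨hπp s, fun j hj => hπc j hj s⟩
  have hπ₀_nonneg (s : α) : 0 ≤ π₀ s := ite_nonneg (hp s).1 le_rfl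
  have hπ₀_sum : ∑ s, π₀ s * U s = ∑ s with ∀ j ∈ D, c j s, p s * U s := by
    simp only [π₀, sum_filter, ite_mul, zero_mul]
  refine ⟨?_, fun s => ⟨hπ₀_nonneg s, (hπ₀_feasible s).1⟩,
    fun j hj s => (hπ₀_feasible s).2 j hj, hπ₀_sum⟩
  rw [← hπ₀_sum]
  exact sum_le_sum fun s _ => mul_le_mul_of_nonneg_right (hπ₀_largest s) (hU s)

theorem lower_bound_constraint_unnecessary {n : ℕ}
    (S : Fin n → Type) [∀ j, Fintype (S j)] [∀ j, Nonempty (S j)]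
    (C D : Finset (Fin n)) (hCD : Disjoint C D) (hCDunion : C ∪ D = Finset.univ)
    (I : Fin n → Finset (Fin n)) (hI : ∀ j, ∀ i ∈ I j, i < j)
    (P : ∀ j : Fin n, (∀ i : (I j), S i.1) → S j → ℝ)
    (hPnonneg : ∀ j ∈ C, ∀ (sI : ∀ i : (I j), S i.1) (sj : S j), 0 ≤ P j sI sj)
    (hPsum : ∀ j ∈ C, ∀ sI : ∀ i : (I j), S i.1, ∑ sj : S j, P j sI sj = 1)
    (Z : ∀ j : Fin n, (∀ i : (I j), S i.1) → S j)
    (U : (∀ j, S j) → ℝ) (hU : ∀ s, 0 ≤ U s)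
    (π : (∀ j, S j) → ℝ)
    (hπbounds : ∀ s : ∀ j, S j, 0 ≤ π s ∧ π s ≤ pathProb C I P s)
    (hπz : ∀ j ∈ D, ∀ s : ∀ j, S j,
      π s ≤ if Z j (restrict I s j) = s j then (1 : ℝ) else 0) :
    (∑ s : ∀ j, S j, π s * U s)
      ≤ (∑ s ∈ Finset.univ.filter
            (fun s : ∀ j, S j => ∀ j ∈ D, Z j (restrict I s j) = s j),
          pathProb C I P s * U s)
    ∧ (let π₀ : (∀ j, S j) → ℝ := fun s =>
        if ∀ j ∈ D, Z j (restrict I s j) = s j then pathProb C I P s else 0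
      (∀ s : ∀ j, S j, 0 ≤ π₀ s ∧ π₀ s ≤ pathProb C I P s) ∧
      (∀ j ∈ D, ∀ s : ∀ j, S j,
        π₀ s ≤ if Z j (restrict I s j) = s j then (1 : ℝ) else 0) ∧
      (∑ s : ∀ j, S j, π₀ s * U s)
        = ∑ s ∈ Finset.univ.filter
            (fun s : ∀ j, S j => ∀ j ∈ D, Z j (restrict I s j) = s j),
          pathProb C I P s * U s) := by
  have hP : ∀ j ∈ C, ∀ sI sj, P j sI sj ∈ Set.Icc 0 1 := fun j hj sI =>
    mem_Icc_of_mem_stdSimplex ⟨hPnonneg j hj sI, hPsum j hj sI⟩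
  exact lower_bound_constraint_unnecessary_general D (fun j s => Z j (restrict I s j) = s j)
    (pathProb_mem_Icc hP) hU (fun s => (hπbounds s).2) hπz
end

section
/- The probability cut forces correct path probabilities: fix a strategy Z with induced binary variables z. If π : S → ℝ satisfies 0 ≤ π(s) ≤ p(s) for all s ∈ S, π(s) ≤ z(s_j | s_{I(j)}) for all j ∈ D and all s ∈ S, and ∑_{s∈S} π(s) = 1, then π(s) = p(s) for every path s compatible with Z (and π(s) = 0 for every path not compatible with Z). -/
/-!
STATEMENT 9: The probability cut forces correct path probabilities: fix a strategy Z
with induced binary variables z. If π : S → ℝ satisfies 0 ≤ π(s) ≤ p(s) for all s ∈ S,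
π(s) ≤ z(s_j | s_{I(j)}) for all j ∈ D and all s ∈ S, and ∑_{s∈S} π(s) = 1, then
π(s) = p(s) for every path s compatible with Z (and π(s) = 0 for every path not
compatible with Z).
-/

open Finset

attribute [local instance] Classical.propDecidable

/-!
Extend the given conditional probabilities to all nodes by letting a decision node choose its
prescribed state with probability one. The product of these local kernels is the path probability
on compatible paths and zero elsewhere, and its total mass is one: replacing the kernels by point
masses, from the last node to the first, changes no total, since the kernels of earlier nodes do
not see the node being replaced. The cut says that `π` lies below this product; as both have total
mass one, they agree.
-/

section PathSums

variable {ι : Type*} [DecidableEq ι] [Fintype ι] {S : ι → Type*} [∀ i, Fintype (S i)]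

theorem sum_eq_sum_of_sum_update_eq {M : Type*} [AddCommMonoid M] {f g : (∀ i, S i) → M} (m : ι)
    (h : ∀ s, ∑ x, f (Function.update s m x) = ∑ x, g (Function.update s m x)) :
    ∑ s, f s = ∑ s, g s := by
  let e := (Equiv.piSplitAt m S).symm
  have update_e (x y : S m) (t : ∀ j : {j // j ≠ m}, S j) :
      Function.update (e (x, t)) m y = e (y, t) := by
    ext j
    by_cases hj : j = m
    · subst hj
      simp [e]
    · simp [e, hj]
  rw [← e.sum_comp, ← e.sum_comp, Fintype.sum_prod_type_right, Fintype.sum_prod_type_right]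
  refine sum_congr rfl fun t _ ↦ ?_
  cases isEmpty_or_nonempty (S m) with
  | inl _ => simp only [univ_eq_empty, sum_empty]
  | inr hne =>
    obtain ⟨x₀⟩ := hne
    simpa only [update_e] using h (e (x₀, t))

variable {R : Type*} [CommSemiring R] {m : ι}

theorem sum_prod_update {F : ι → (∀ i, S i) → R}
    (hF : ∀ j ≠ m, ∀ s x, F j (Function.update s m x) = F j s) (s : ∀ i, S i) :
    ∑ x, ∏ j, F j (Function.update s m x) =
      (∑ x, F m (Function.update s m x)) * ∏ j ∈ univ.erase m, F j s := by
  rw [sum_mul]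
  refine sum_congr rfl fun x _ ↦ ?_
  rw [← mul_prod_erase _ _ (mem_univ m)]
  congr 1
  exact prod_congr rfl fun j hj ↦ hF j (ne_of_mem_erase hj) s x

theorem sum_prod_eq_sum_prod_of_sum_update_eq {F G : ι → (∀ i, S i) → R}
    (hm : ∀ s, ∑ x, F m (Function.update s m x) = ∑ x, G m (Function.update s m x))
    (hFG : ∀ j ≠ m, F j = G j) (hG : ∀ j ≠ m, ∀ s x, G j (Function.update s m x) = G j s) :
    ∑ s, ∏ j, F j s = ∑ s, ∏ j, G j s := by
  have hF : ∀ j ≠ m, ∀ s x, F j (Function.update s m x) = F j s := fun j hj ↦ by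
    simpa only [hFG j hj] using hG j hj
  refine sum_eq_sum_of_sum_update_eq m fun s ↦ ?_
  rw [sum_prod_update hF, sum_prod_update hG, hm]
  congr 1
  exact prod_congr rfl fun j hj ↦ by rw [hFG j (ne_of_mem_erase hj)]

end PathSums

section LocalKernels

variable {ι : Type*} [DecidableEq ι] {S : ι → Type*} [∀ i, Fintype (S i)]
  {R : Type*} [CommSemiring R]

/-- A conditional weight of the state of node `j` given the states of earlier nodes, summing to one
over the states of `j`. It is encoded as a function of the whole path, so that chance and decision
nodes with different information sets can be multiplied together. -/
structure IsLocalKernel [Preorder ι] (j : ι) (f : (∀ i, S i) → R) : Prop where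
  dependsOn : DependsOn f (Set.Iic j)
  sum_update : ∀ s, ∑ x, f (Function.update s j x) = 1

namespace IsLocalKernel

theorem of_restrict [Preorder ι] {j : ι} {I : Finset ι} (hI : ∀ i ∈ I, i < j)
    {Q : (∀ i : I, S i) → S j → R} (hQ : ∀ t, ∑ x, Q t x = 1) :
    IsLocalKernel j fun s ↦ Q (I.restrict s) (s j) where
  dependsOn s t hst := by
    have hr : I.restrict s = I.restrict t := funext fun i ↦ hst i (hI i i.2).le
    simp only [hr, hst j Set.self_mem_Iic]
  sum_update s := by
    have hr (x : S j) : I.restrict (Function.update s j x) = I.restrict s :=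
      funext fun i ↦ Function.update_of_ne (hI i i.2).ne _ _
    simp only [hr, Function.update_self, hQ]

theorem of_policy [Preorder ι] {j : ι} {I : Finset ι} (hI : ∀ i ∈ I, i < j)
    (z : (∀ i : I, S i) → S j) :
    IsLocalKernel j fun s ↦ if z (I.restrict s) = s j then (1 : R) else 0 :=
  of_restrict (Q := fun t x ↦ if z t = x then (1 : R) else 0) hI fun t ↦ by
    rw [sum_ite_eq, if_pos (mem_univ _)]

theorem pointMass [Preorder ι] (j : ι) (a : S j) :
    IsLocalKernel j fun s : ∀ i, S i ↦ if a = s j then (1 : R) else 0 :=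
  of_policy (I := ∅) (by simp) fun _ ↦ a

theorem apply_update_of_lt [Preorder ι] {j m : ι} {f : (∀ i, S i) → R} (hf : IsLocalKernel j f)
    (hjm : j < m) (s : ∀ i, S i) (x : S m) : f (Function.update s m x) = f s :=
  hf.dependsOn fun _ hi ↦ Function.update_of_ne (hi.trans_lt hjm).ne _ _

variable [Fintype ι] [LinearOrder ι] {F : ι → (∀ i, S i) → R}

theorem sum_prod_piecewise_pointMass (hF : ∀ j, IsLocalKernel j (F j)) (a : ∀ i, S i)
    (A : Finset ι) :
    ∑ s, ∏ j, A.piecewise F (fun j s ↦ if a j = s j then 1 else 0) j s = 1 := by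
  induction A using Finset.induction_on_max with
  | empty => simp [prod_boole, ← funext_iff]
  | insert m A hA ih =>
    have hmA : m ∉ A := fun hm ↦ (hA m hm).false
    refine Eq.trans (sum_prod_eq_sum_prod_of_sum_update_eq (m := m) ?_ ?_ ?_) ih
    · intro s
      simp only [piecewise_insert_self, piecewise_eq_of_notMem _ _ _ hmA, (hF m).sum_update,
        (pointMass m (a m)).sum_update]
    · exact fun j hj ↦ piecewise_insert_of_ne _ _ _ hj
    · intro j hj s x
      by_cases hjA : j ∈ A
      · simpa only [piecewise_eq_of_mem _ _ _ hjA] using (hF j).apply_update_of_lt (hA j hjA) s x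
      · simp only [piecewise_eq_of_notMem _ _ _ hjA, Function.update_of_ne hj]

theorem sum_prod_eq_one [Nonempty (∀ i, S i)] (hF : ∀ j, IsLocalKernel j (F j)) :
    ∑ s, ∏ j, F j s = 1 := by
  obtain ⟨a⟩ := ‹Nonempty (∀ i, S i)›
  simpa only [piecewise_univ] using sum_prod_piecewise_pointMass hF a univ

end IsLocalKernel

end LocalKernels

section InfluenceDiagram

/-- The paths whose states at the decision nodes `D` are those prescribed by the strategy `Z`; this
is membership in `S(Z)`. -/
def IsCompatible {ι : Type*} {S : ι → Type*} (D : Finset ι) (I : ι → Finset ι)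
    (Z : ∀ j, (∀ i : I j, S i) → S j) (s : ∀ i, S i) : Prop :=
  ∀ j ∈ D, Z j ((I j).restrict s) = s j

variable {ι : Type*} [DecidableEq ι] [Fintype ι] [LinearOrder ι] {S : ι → Type*}
  [∀ i, Fintype (S i)] {R : Type*} [CommSemiring R] {C D : Finset ι} {I : ι → Finset ι}
  {P : ∀ j, (∀ i : I j, S i) → S j → R}

theorem sum_compatible_prod_eq_one [Nonempty (∀ i, S i)] (hCD : Disjoint C D)
    (hCDunion : C ∪ D = univ) (hI : ∀ j, ∀ i ∈ I j, i < j)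
    (hPsum : ∀ j ∈ C, ∀ t, ∑ x, P j t x = 1) (Z : ∀ j, (∀ i : I j, S i) → S j) :
    ∑ s, (if IsCompatible D I Z s then ∏ j ∈ C, P j ((I j).restrict s) (s j) else 0) = 1 := by
  let F (j : ι) (s : ∀ i, S i) : R :=
    if j ∈ C then P j ((I j).restrict s) (s j) else if Z j ((I j).restrict s) = s j then 1 else 0
  have hF (j : ι) : IsLocalKernel j (F j) := by
    by_cases hj : j ∈ C
    · simpa only [F, hj, if_true] using IsLocalKernel.of_restrict (hI j) (hPsum j hj)
    · simpa only [F, hj, if_false] using IsLocalKernel.of_policy (hI j) (Z j)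
  rw [← IsLocalKernel.sum_prod_eq_one hF]
  refine sum_congr rfl fun s _ ↦ ?_
  have prod_chance : ∏ j ∈ C, F j s = ∏ j ∈ C, P j ((I j).restrict s) (s j) :=
    prod_congr rfl fun j hj ↦ if_pos hj
  have prod_decision : ∏ j ∈ D, F j s = if IsCompatible D I Z s then 1 else 0 := by
    convert! (prod_congr rfl fun j hj ↦ if_neg (disjoint_right.mp hCD hj)).trans prod_boole
  rw [← hCDunion, prod_union hCD, prod_chance, prod_decision, mul_ite, mul_one, mul_zero]

theorem probability_cut_forces_correct_probabilities_general [PartialOrder R]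
    [IsOrderedCancelAddMonoid R] (hCD : Disjoint C D)
    (hCDunion : C ∪ D = univ) (hI : ∀ j, ∀ i ∈ I j, i < j)
    (hPsum : ∀ j ∈ C, ∀ t, ∑ x, P j t x = 1) (Z : ∀ j, (∀ i : I j, S i) → S j)
    (π : (∀ i, S i) → R) (hπP : ∀ s, π s ≤ ∏ j ∈ C, P j ((I j).restrict s) (s j))
    (hπz : ∀ j ∈ D, ∀ s, π s ≤ if Z j ((I j).restrict s) = s j then 1 else 0)
    (hπsum : ∑ s, π s = 1) (s : ∀ i, S i) :
    (IsCompatible D I Z s → π s = ∏ j ∈ C, P j ((I j).restrict s) (s j)) ∧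
      (¬ IsCompatible D I Z s → π s = 0) := by
  have : Nonempty (∀ i, S i) := ⟨s⟩
  let q (s : ∀ i, S i) : R :=
    if IsCompatible D I Z s then ∏ j ∈ C, P j ((I j).restrict s) (s j) else 0
  have hπq : ∀ s ∈ univ, π s ≤ q s := by
    intro s _
    by_cases hs : IsCompatible D I Z s
    · simpa only [q, if_pos hs] using hπP s
    · obtain ⟨j, hj, hne⟩ : ∃ j ∈ D, Z j ((I j).restrict s) ≠ s j := by
        simpa only [IsCompatible, not_forall, exists_prop] using hs
      simpa only [q, if_neg hs, if_neg hne] using hπz j hj s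
  have hsum : ∑ s, π s = ∑ s, q s :=
    hπsum.trans (sum_compatible_prod_eq_one hCD hCDunion hI hPsum Z).symm
  have heq : π s = q s := (sum_eq_sum_iff_of_le hπq).mp hsum s (mem_univ s)
  exact ⟨fun hs ↦ heq.trans (if_pos hs), fun hs ↦ heq.trans (if_neg hs)⟩

end InfluenceDiagram

theorem probability_cut_forces_correct_probabilities {n : ℕ}
    (S : Fin n → Type) [∀ j, Fintype (S j)] [∀ j, Nonempty (S j)]
    (C D : Finset (Fin n)) (hCD : Disjoint C D) (hCDunion : C ∪ D = Finset.univ)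
    (I : Fin n → Finset (Fin n)) (hI : ∀ j, ∀ i ∈ I j, i < j)
    (P : ∀ j : Fin n, (∀ i : (I j), S i.1) → S j → ℝ)
    (hPnonneg : ∀ j ∈ C, ∀ (sI : ∀ i : (I j), S i.1) (sj : S j), 0 ≤ P j sI sj)
    (hPsum : ∀ j ∈ C, ∀ sI : ∀ i : (I j), S i.1, ∑ sj : S j, P j sI sj = 1)
    (Z : ∀ j : Fin n, (∀ i : (I j), S i.1) → S j)
    (π : (∀ j, S j) → ℝ)
    (hπbounds : ∀ s : ∀ j, S j, 0 ≤ π s ∧ π s ≤ pathProb C I P s)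
    (hπz : ∀ j ∈ D, ∀ s : ∀ j, S j,
      π s ≤ if Z j (restrict I s j) = s j then (1 : ℝ) else 0)
    (hπsum : ∑ s : ∀ j, S j, π s = 1) :
    ∀ s : ∀ j, S j,
      ((∀ j ∈ D, Z j (restrict I s j) = s j) → π s = pathProb C I P s) ∧
      (¬ (∀ j ∈ D, Z j (restrict I s j) = s j) → π s = 0) :=
  probability_cut_forces_correct_probabilities_general hCD hCDunion hI hPsum Z π
    (fun s ↦ (hπbounds s).2) hπz hπsum
end
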